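/- arXiv:0903.4969 — 3 statements merged into one kernel-verified Lean document; each statement's English description precedes it below -/
import Mathlib

section
/- In 𝔽₂[t₁,…,t₅], the product ∏_{1≤j<k≤5} (1 + t_j + t_k) is congruent to 1 + e₄ modulo the ideal generated by e₁, e₂, e₃, e₅. -/
open MvPolynomial Finset

/-- The `i`-th elementary symmetric polynomial in `𝔽₂[t₁,…,t₅]`. -/
noncomputable def e (i : ℕ) : MvPolynomial (Fin 5) (ZMod 2) :=
  esymm (Fin 5) (ZMod 2) i

/-- Triangular form of the computation: the three complete-symmetric relations suffice. -/
lemma reduced_identity {R : Type*} [CommRing R] [CharP R 2] (a b c y : R)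
    (hc : c^3 + (a+b)*c^2 + (a^2+a*b+b^2)*c + (a^3+a^2*b+a*b^2+b^3) = 0)
    (hb : b^4 + a*b^3 + a^2*b^2+a^3*b+a^4 = y)
    (ha : a^5 = y * a) :
    (1+a+a^4+y) * ((1+b)^3+(a+b)*(1+b)^2+(a^2+a*b+b^2)*(1+b)+(a^3+a^2*b+a*b^2+b^3)) *
      ((1+c)^2+(a+b+c)*(1+c)+(a^2+b^2+c^2+a*b+b*c+a*c)) * (1+a+b+c) = 1 + y := by
  grind

lemma core {R : Type*} [CommRing R] [CharP R 2] (a b c d f : R)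
    (h1 : a+b+c+d+f = 0)
    (h2 : a*b+a*c+a*d+a*f+b*c+b*d+b*f+c*d+c*f+d*f = 0)
    (h3 : a*b*c+a*b*d+a*b*f+a*c*d+a*c*f+a*d*f+b*c*d+b*c*f+b*d*f+c*d*f = 0)
    (h5 : a*b*c*d*f = 0) :
    (1+a+b)*(1+a+c)*(1+a+d)*(1+a+f)*(1+b+c)*(1+b+d)*(1+b+f)*(1+c+d)*(1+c+f)*(1+d+f)
     = 1 + (a*b*c*d+a*b*c*f+a*b*d*f+a*c*d*f+b*c*d*f) := by
  have two : (2:R) = 0 := by exact_mod_cast CharP.cast_eq_zero R 2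
  obtain ⟨y, hy⟩ : ∃ y, y = a*b*c*d+a*b*c*f+a*b*d*f+a*c*d*f+b*c*d*f := ⟨_, rfl⟩
  have hf : f = a+b+c+d := by linear_combination h1 - (a+b+c+d)*two
  have key : ∀ x : R, (x+a)*(x+b)*(x+c)*(x+d)*(x+f) = x^5 + y*x := by
    intro x
    linear_combination x^4*h1+x^3*h2+x^2*h3+h5 - x*hy
  have ha : a^5 = y*a := by
    linear_combination -key a + a*(a+b)*(a+c)*(a+d)*(a+f)*two - y*a*two
  have hd : d^2 + (a+b+c)*d + (a^2+b^2+c^2+a*b+b*c+a*c) = 0 := by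
    subst hf; grind
  have hc : c^3 + (a+b)*c^2 + (a^2+a*b+b^2)*c + (a^3+a^2*b+a*b^2+b^3) = 0 := by
    subst hf; grind
  have hb : b^4 + a*b^3 + a^2*b^2+a^3*b+a^4 = y := by
    subst hf; grind
  have g1 : (1+a+b)*(1+a+c)*(1+a+d)*(1+a+f) = 1+a+a^4+y := by
    linear_combination key (1+a) + ha +
      (2*a+5*a^2+5*a^3+2*a^4+y*a - a*((1+a+b)*(1+a+c)*(1+a+d)*(1+a+f)))*two
  have g2 : (1+b+c)*(1+b+d)*(1+b+f) =
     (1+b)^3+(a+b)*(1+b)^2+(a^2+a*b+b^2)*(1+b)+(a^3+a^2*b+a*b^2+b^3) := by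
    subst hf; clear hy h5 key ha hb g1; grind
  have g3 : (1+c+d)*(1+c+f) =
     (1+c)^2+(a+b+c)*(1+c)+(a^2+b^2+c^2+a*b+b*c+a*c) := by
    subst hf; clear hy h5 key ha hb g1 g2; grind
  have g4 : 1+d+f = 1+a+b+c := by subst hf; linear_combination d*two
  rw [← hy, ← reduced_identity a b c y hc hb ha, ← g1, ← g2, ← g3, ← g4]
  ring

/-- in `𝔽₂[t₁,…,t₅]`, `∏_{1≤j<k≤5} (1 + t_j + t_k)` is congruent
to `1 + e₄` modulo the ideal `(e₁, e₂, e₃, e₅)`. -/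
theorem lambda2_spin5 :
    (∏ p ∈ univ.filter (fun p : Fin 5 × Fin 5 => p.1 < p.2),
        (1 + X p.1 + X p.2) : MvPolynomial (Fin 5) (ZMod 2))
      - (1 + e 4) ∈ Ideal.span {e 1, e 2, e 3, e 5} := by
  set I : Ideal (MvPolynomial (Fin 5) (ZMod 2)) := Ideal.span {e 1, e 2, e 3, e 5} with hI
  have m : ∀ i ∈ ({1,2,3,5} : Set ℕ), Ideal.Quotient.mk I (e i) = 0 := by
    intro i hi
    rw [Ideal.Quotient.eq_zero_iff_mem]
    apply Ideal.subset_span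
    rcases hi with rfl | rfl | rfl | rfl <;> simp
  have p1 : (univ : Finset (Fin 5)).powersetCard 1 = {{0},{1},{2},{3},{4}} := by decide
  have p2 : (univ : Finset (Fin 5)).powersetCard 2 =
    {{0,1},{0,2},{0,3},{0,4},{1,2},{1,3},{1,4},{2,3},{2,4},{3,4}} := by decide
  have p3 : (univ : Finset (Fin 5)).powersetCard 3 =
    {{0,1,2},{0,1,3},{0,1,4},{0,2,3},{0,2,4},{0,3,4},{1,2,3},{1,2,4},{1,3,4},{2,3,4}} := by decide
  have p4 : (univ : Finset (Fin 5)).powersetCard 4 =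
    {{0,1,2,3},{0,1,2,4},{0,1,3,4},{0,2,3,4},{1,2,3,4}} := by decide
  have p5 : (univ : Finset (Fin 5)).powersetCard 5 = {{0,1,2,3,4}} := by decide
  have pf : univ.filter (fun p : Fin 5 × Fin 5 => p.1 < p.2) =
    {(0,1),(0,2),(0,3),(0,4),(1,2),(1,3),(1,4),(2,3),(2,4),(3,4)} := by decide
  have q1 : e 1 = X 0 + X 1 + X 2 + X 3 + X 4 := by
    rw [e, esymm, p1]
    repeat rw [sum_insert (by decide)]
    simp; ring
  have q2 : e 2 = X 0*X 1+X 0*X 2+X 0*X 3+X 0*X 4+X 1*X 2+X 1*X 3+X 1*X 4+X 2*X 3+X 2*X 4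
      +X 3*X 4 := by
    rw [e, esymm, p2]
    repeat rw [sum_insert (by decide)]
    simp; ring
  have q3 : e 3 = X 0*X 1*X 2+X 0*X 1*X 3+X 0*X 1*X 4+X 0*X 2*X 3+X 0*X 2*X 4+X 0*X 3*X 4
      +X 1*X 2*X 3+X 1*X 2*X 4+X 1*X 3*X 4+X 2*X 3*X 4 := by
    rw [e, esymm, p3]
    repeat rw [sum_insert (by decide)]
    simp; ring
  have q4 : e 4 = X 0*X 1*X 2*X 3+X 0*X 1*X 2*X 4+X 0*X 1*X 3*X 4+X 0*X 2*X 3*X 4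
      +X 1*X 2*X 3*X 4 := by
    rw [e, esymm, p4]
    repeat rw [sum_insert (by decide)]
    simp; ring
  have q5 : e 5 = X 0*X 1*X 2*X 3*X 4 := by
    rw [e, esymm, p5]
    simp; ring
  have h1 := m 1 (by simp)
  have h2 := m 2 (by simp)
  have h3 := m 3 (by simp)
  have h5 := m 5 (by simp)
  rw [q1] at h1
  rw [q2] at h2
  rw [q3] at h3
  rw [q5] at h5
  rw [← Ideal.Quotient.eq, pf, q4]
  repeat rw [prod_insert (by decide)]
  rw [prod_singleton]
  simp only [map_add, map_mul, map_one] at h1 h2 h3 h5 ⊢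
  rcases subsingleton_or_nontrivial (MvPolynomial (Fin 5) (ZMod 2) ⧸ I) with hs | hn
  · exact Subsingleton.elim _ _
  haveI : CharP (MvPolynomial (Fin 5) (ZMod 2) ⧸ I) 2 :=
    charP_of_injective_algebraMap (algebraMap (ZMod 2) _).injective 2
  rw [← core _ _ _ _ _ h1 h2 h3 h5]
  ring
end

section
/- In 𝔽₂[t₁,…,t₅], the product ∏_{1≤j<k≤5} (1 + t_j + t_k) is congruent to 1 + e₂ + e₃ + (e₄ + e₂²) + e₅ + (e₃² + e₂³) + e₂²e₃ + (e₃e₅ + e₂²e₄ + e₂e₃²) + (e₃³ + e₂²e₅) + (e₅² + e₂e₃e₅ + e₃²e₄) modulo the ideal generated by e₁. -/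
open MvPolynomial Finset

/-- Total Chern class of the second exterior power in rank four, modulo two. -/
theorem chern_four {R : Type*} [CommRing R] [CharP R 2] (a b c d s1 s2 s3 s4 : R)
    (h1 : s1 = a + b + c + d)
    (h2 : s2 = a*b + a*c + a*d + b*c + b*d + c*d)
    (h3 : s3 = a*b*c + a*b*d + a*c*d + b*c*d)
    (h4 : s4 = a*b*c*d) :
    (1+a+b)*(1+a+c)*(1+a+d)*(1+b+c)*(1+b+d)*(1+c+d)
      = 1 + s1 + s1^2 + s1^3 + (s1*s3 + s2^2) + (s1^2*s3 + s1*s2^2)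
        + (s1^2*s4 + s1*s2*s3 + s3^2) := by
  subst h1 h2 h3 h4
  grind

/-- The same identity in rank five, in terms of symmetric functions of four variables. -/
theorem chern_five_aux {R : Type*} [CommRing R] [CharP R 2] (s1 s2 s3 s4 e2 e3 e4 e5 : R)
    (h2 : e2 = s2 + s1 ^ 2)
    (h3 : e3 = s3 + s1 * s2)
    (h4 : e4 = s4 + s1 * s3)
    (h5 : e5 = s1 * s4) :
    (1 + s1 + s1^2 + s1^3 + (s1*s3 + s2^2) + (s1^2*s3 + s1*s2^2)
        + (s1^2*s4 + s1*s2*s3 + s3^2))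
      * ((1+s1)^4 + (1+s1)^3*s1 + (1+s1)^2*s2 + (1+s1)*s3 + s4)
      - (1 + e2 + e3 + (e4 + e2 ^ 2) + e5 + (e3 ^ 2 + e2 ^ 3)
          + e2 ^ 2 * e3
          + (e3 * e5 + e2 ^ 2 * e4 + e2 * e3 ^ 2)
          + (e3 ^ 3 + e2 ^ 2 * e5)
          + (e5 ^ 2 + e2 * e3 * e5 + e3 ^ 2 * e4)) = 0 := by
  subst h2 h3 h4 h5
  grind

/-- The identity in four free variables over a ring of characteristic two
(the fifth variable being the sum of the others). -/
theorem chern_identity {R : Type*} [CommRing R] [CharP R 2] (a b c d f e2 e3 e4 e5 : R)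
    (hf : f = a + b + c + d)
    (h2 : e2 = a*b + a*c + a*d + a*f + b*c + b*d + b*f + c*d + c*f + d*f)
    (h3 : e3 = a*b*c + a*b*d + a*b*f + a*c*d + a*c*f + a*d*f + b*c*d + b*c*f + b*d*f + c*d*f)
    (h4 : e4 = a*b*c*d + a*b*c*f + a*b*d*f + a*c*d*f + b*c*d*f)
    (h5 : e5 = a*b*c*d*f) :
    (1+a+b)*(1+a+c)*(1+a+d)*(1+a+f)*(1+b+c)*(1+b+d)*(1+b+f)*(1+c+d)*(1+c+f)*(1+d+f)
      - (1 + e2 + e3 + (e4 + e2 ^ 2) + e5 + (e3 ^ 2 + e2 ^ 3)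
          + e2 ^ 2 * e3
          + (e3 * e5 + e2 ^ 2 * e4 + e2 * e3 ^ 2)
          + (e3 ^ 3 + e2 ^ 2 * e5)
          + (e5 ^ 2 + e2 * e3 * e5 + e3 ^ 2 * e4)) = 0 := by
  have k1 := chern_four a b c d _ _ _ _ rfl rfl rfl rfl
  have k2 : ∀ u : R, (u+a)*(u+b)*(u+c)*(u+d) = u^4 + u^3*(a + b + c + d)
      + u^2*(a*b + a*c + a*d + b*c + b*d + c*d)
      + u*(a*b*c + a*b*d + a*c*d + b*c*d) + a*b*c*d := by
    intro u; ring
  have k3 := chern_five_aux (a + b + c + d) (a*b + a*c + a*d + b*c + b*d + c*d)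
    (a*b*c + a*b*d + a*c*d + b*c*d) (a*b*c*d) e2 e3 e4 e5
    (by rw [h2, hf]; ring) (by rw [h3, hf]; ring) (by rw [h4, hf]; ring) (by rw [h5, hf]; ring)
  rw [← k1, ← k2, ← hf] at k3
  rw [← k3, add_right_comm 1 f a, add_right_comm 1 f b, add_right_comm 1 f c,
    add_right_comm 1 f d]
  congr 1
  clear k3 k2 k1 h2 h3 h4 h5 hf
  generalize 1 + a + b = wab
  generalize 1 + a + c = wac
  generalize 1 + a + d = wad
  generalize 1 + a + f = waf
  generalize 1 + b + c = wbc
  generalize 1 + b + d = wbd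
  generalize 1 + b + f = wbf
  generalize 1 + c + d = wcd
  generalize 1 + c + f = wcf
  generalize 1 + d + f = wdf
  ring

/-- in `𝔽₂[t₁,…,t₅]`, `∏_{1≤j<k≤5} (1 + t_j + t_k)` is congruent
to the displayed polynomial in `e₂,…,e₅` modulo the ideal `(e₁)`; this is the
mod 2 total Chern class of `λ² : SU(5) → SU(10)`. -/
theorem chern_lambda2_SU5 :
    (∏ p ∈ univ.filter (fun p : Fin 5 × Fin 5 => p.1 < p.2),
        (1 + X p.1 + X p.2) : MvPolynomial (Fin 5) (ZMod 2))
      - (1 + e 2 + e 3 + (e 4 + e 2 ^ 2) + e 5 + (e 3 ^ 2 + e 2 ^ 3)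
          + e 2 ^ 2 * e 3
          + (e 3 * e 5 + e 2 ^ 2 * e 4 + e 2 * e 3 ^ 2)
          + (e 3 ^ 3 + e 2 ^ 2 * e 5)
          + (e 5 ^ 2 + e 2 * e 3 * e 5 + e 3 ^ 2 * e 4))
      ∈ Ideal.span {e 1} := by
  have hfil : univ.filter (fun p : Fin 5 × Fin 5 => p.1 < p.2)
      = {(0,1),(0,2),(0,3),(0,4),(1,2),(1,3),(1,4),(2,3),(2,4),(3,4)} := by decide
  have p1 : powersetCard 1 (univ : Finset (Fin 5)) = {{0},{1},{2},{3},{4}} := by decide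
  have p2 : powersetCard 2 (univ : Finset (Fin 5))
      = {{0,1},{0,2},{0,3},{0,4},{1,2},{1,3},{1,4},{2,3},{2,4},{3,4}} := by decide
  have p3 : powersetCard 3 (univ : Finset (Fin 5))
      = {{0,1,2},{0,1,3},{0,1,4},{0,2,3},{0,2,4},{0,3,4},{1,2,3},{1,2,4},{1,3,4},{2,3,4}} := by
    decide
  have p4 : powersetCard 4 (univ : Finset (Fin 5))
      = {{0,1,2,3},{0,1,2,4},{0,1,3,4},{0,2,3,4},{1,2,3,4}} := by decide
  have p5 : powersetCard 5 (univ : Finset (Fin 5)) = {{0,1,2,3,4}} := by decide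
  have h1 : e 1 = X 0 + X 1 + X 2 + X 3 + X 4 := by
    rw [e, esymm, p1]
    repeat rw [sum_insert (by decide)]
    simp [add_assoc]
  have h2 : e 2 = X 0 * X 1 + X 0 * X 2 + X 0 * X 3 + X 0 * X 4 + X 1 * X 2 + X 1 * X 3
      + X 1 * X 4 + X 2 * X 3 + X 2 * X 4 + X 3 * X 4 := by
    rw [e, esymm, p2]
    repeat rw [sum_insert (by decide)]
    simp [add_assoc]
  have h3 : e 3 = X 0 * X 1 * X 2 + X 0 * X 1 * X 3 + X 0 * X 1 * X 4 + X 0 * X 2 * X 3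
      + X 0 * X 2 * X 4 + X 0 * X 3 * X 4 + X 1 * X 2 * X 3 + X 1 * X 2 * X 4
      + X 1 * X 3 * X 4 + X 2 * X 3 * X 4 := by
    rw [e, esymm, p3]
    repeat rw [sum_insert (by decide)]
    simp [add_assoc, mul_assoc]
  have h4 : e 4 = X 0 * X 1 * X 2 * X 3 + X 0 * X 1 * X 2 * X 4 + X 0 * X 1 * X 3 * X 4
      + X 0 * X 2 * X 3 * X 4 + X 1 * X 2 * X 3 * X 4 := by
    rw [e, esymm, p4]
    repeat rw [sum_insert (by decide)]
    simp [add_assoc, mul_assoc]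
  have h5 : e 5 = X 0 * X 1 * X 2 * X 3 * X 4 := by
    rw [e, esymm, p5]
    simp [mul_assoc]
  have hprod : (∏ p ∈ univ.filter (fun p : Fin 5 × Fin 5 => p.1 < p.2),
        (1 + X p.1 + X p.2) : MvPolynomial (Fin 5) (ZMod 2))
      = (1+X 0+X 1)*(1+X 0+X 2)*(1+X 0+X 3)*(1+X 0+X 4)*(1+X 1+X 2)*(1+X 1+X 3)*(1+X 1+X 4)
        *(1+X 2+X 3)*(1+X 2+X 4)*(1+X 3+X 4) := by
    rw [hfil]
    repeat rw [prod_insert (by decide)]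
    simp [mul_assoc]
  by_cases hI : Ideal.span {e 1} = ⊤
  · rw [hI]; exact Submodule.mem_top
  rw [hprod, ← Ideal.Quotient.eq_zero_iff_mem]
  have : Nontrivial (MvPolynomial (Fin 5) (ZMod 2) ⧸ Ideal.span {e 1}) :=
    Ideal.Quotient.nontrivial_iff.mpr hI
  have : CharP (MvPolynomial (Fin 5) (ZMod 2) ⧸ Ideal.span {e 1}) 2 :=
    charP_of_injective_algebraMap (algebraMap (ZMod 2) _).injective 2
  let q := Ideal.Quotient.mk (Ideal.span {e 1})
  have hq : q (e 1) = 0 :=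
    Ideal.Quotient.eq_zero_iff_mem.mpr (Ideal.subset_span rfl)
  have key := chern_identity (q (X 0)) (q (X 1)) (q (X 2)) (q (X 3)) (q (X 4))
    (q (e 2)) (q (e 3)) (q (e 4)) (q (e 5))
    (by
      replace hq := (congrArg q h1).symm.trans hq
      simp only [map_add] at hq
      exact (CharTwo.add_eq_zero.mp hq).symm)
    (by rw [h2]; simp only [map_add, map_mul])
    (by rw [h3]; simp only [map_add, map_mul])
    (by rw [h4]; simp only [map_add, map_mul])
    (by rw [h5]; simp only [map_mul])
  simpa only [map_add, map_mul, map_sub, map_pow, map_one] using key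
end

section
/- In 𝔽₂[t₁,…,t₅], let Q be the product of ∏_{1≤j<k≤5}(1 + t_j + t_k) and ∏_{|S|=4, S⊆{1,…,5}}(1 + Σ_{i∈S} t_i). Then the homogeneous component of Q of degree 8 is congruent to e₃e₅ + e₄² + e₂⁴ modulo the ideal generated by e₁. -/
open MvPolynomial Finset

/-- `Q`: the product of `∏_{1≤j<k≤5}(1 + t_j + t_k)` and
`∏_{|S|=4}(1 + Σ_{i∈S} t_i)` in `𝔽₂[t₁,…,t₅]`, representing the mod 2 total
Chern class of `1 ⊕ λ² ⊕ λ⁴` of `SU(5)`. -/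
noncomputable def Q : MvPolynomial (Fin 5) (ZMod 2) :=
  (∏ p ∈ univ.filter (fun p : Fin 5 × Fin 5 => p.1 < p.2), (1 + X p.1 + X p.2)) *
  ∏ s ∈ (univ : Finset (Fin 5)).powersetCard 4, (1 + ∑ i ∈ s, X i)

namespace C8aux

/-- Chern class of `λ²` for `SU(5)`, integrally. -/
lemma lambda2 {R : Type*} [CommRing R] (a b c d t e2 e3 e4 e5 : R)
    (ht : t = -(a + b + c + d))
    (h2 : e2 = a*b + a*c + a*d + a*t + b*c + b*d + b*t + c*d + c*t + d*t)
    (h3 : e3 = a*b*c + a*b*d + a*b*t + a*c*d + a*c*t + a*d*t + b*c*d + b*c*t + b*d*t + c*d*t)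
    (h4 : e4 = a*b*c*d + a*b*c*t + a*b*d*t + a*c*d*t + b*c*d*t)
    (h5 : e5 = a*b*c*d*t) :
    (1+a+b)*(1+a+c)*(1+a+d)*(1+a+t)*(1+b+c)*(1+b+d)*(1+b+t)*(1+c+d)*(1+c+t)*(1+d+t)
    = 1 + 3*e2 + e3 - 3*e4 + 3*e2^2 - 11*e5 + 2*e2*e3 - e3^2 - 2*e2*e4 + e2^3 - 4*e3*e4
      - 4*e2*e5 + e2^2*e3 - 4*e4^2 + 7*e3*e5 - e2*e3^2 + e2^2*e4 + 4*e4*e5 - e3^3 - e2^2*e5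
      - e5^2 - e3^2*e4 + e2*e3*e5 := by
  subst h2 h3 h4 h5 ht
  ring

lemma lambda4 {R : Type*} [CommRing R] (a b c d t e2 e3 e4 e5 : R)
    (ht : t = -(a + b + c + d))
    (h2 : e2 = a*b + a*c + a*d + a*t + b*c + b*d + b*t + c*d + c*t + d*t)
    (h3 : e3 = a*b*c + a*b*d + a*b*t + a*c*d + a*c*t + a*d*t + b*c*d + b*c*t + b*d*t + c*d*t)
    (h4 : e4 = a*b*c*d + a*b*c*t + a*b*d*t + a*c*d*t + b*c*d*t)
    (h5 : e5 = a*b*c*d*t) :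
    (1+(b+c+d+t))*(1+(a+c+d+t))*(1+(a+b+d+t))*(1+(a+b+c+t))*(1+(a+b+c+d))
    = 1 + e2 - e3 + e4 - e5 := by
  subst h2 h3 h4 h5 ht
  ring

lemma total {R : Type*} [CommRing R] (two : (2 : R) = 0) (e2 e3 e4 e5 : R) :
    (1 + 3*e2 + e3 - 3*e4 + 3*e2^2 - 11*e5 + 2*e2*e3 - e3^2 - 2*e2*e4 + e2^3 - 4*e3*e4
      - 4*e2*e5 + e2^2*e3 - 4*e4^2 + 7*e3*e5 - e2*e3^2 + e2^2*e4 + 4*e4*e5 - e3^3 - e2^2*e5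
      - e5^2 - e3^2*e4 + e2*e3*e5) * (1 + e2 - e3 + e4 - e5)
    = 1 + (e3 * e5 + e4 ^ 2 + e2 ^ 4)
      + (e3*e4*e5 + e2*e5^2 + e2^2*e3*e5 + e2^2*e4^2 + e3^4)
      + (e4*e5^2 + e3^3*e5 + e2^2*e5^2 + e3^2*e4^2 + e2*e3*e4*e5)
      + (e5^3 + e3^2*e4*e5 + e2*e3*e5^2) := by
  linear_combination (
    (2)*e2^1 + (-1)*e4^1 + (-6)*e5^1 + (3)*e2^2 + (-1)*e2^1*e4^1 + (-9)*e2^1*e5^1 + (-1)*e3^2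
    + (8)*e3^1*e5^1 + (-4)*e4^2 + (-2)*e4^1*e5^1 + (2)*e2^3 + (1)*e2^2*e4^1 + (-4)*e2^2*e5^1 +
    (5)*e5^2 + (-2)*e2^1*e3^2 + (5)*e2^1*e3^1*e5^1 + (1)*e3^2*e4^1 + (-3)*e3^2*e5^1 +
    (-3)*e2^1*e4^2 + (1)*e2^1*e4^1*e5^1 + (1)*e2^3*e4^1 + (-1)*e2^3*e5^1 + (3)*e3^1*e4^1*e5^1
    + (1)*e2^1*e5^2 + (-1)*e2^2*e3^2 + (-2)*e4^3 + (4)*e4^2*e5^1 + (-3)*e3^1*e5^2 +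
    (-1)*e2^1*e3^2*e4^1 + (-1)*e2^2*e4^1*e5^1 + (-3)*e4^1*e5^2 + (-1)*e3^2*e4^2 +
    (-1)*e2^1*e3^1*e5^2) * two

lemma e1_eq : e 1 = X 0 + X 1 + X 2 + X 3 + X 4 := by
  simp [e, Fin.sum_univ_five]

lemma Q_eq : Q = ((1+X 0+X 1)*(1+X 0+X 2)*(1+X 0+X 3)*(1+X 0+X 4)*(1+X 1+X 2)*(1+X 1+X 3)
    *(1+X 1+X 4)*(1+X 2+X 3)*(1+X 2+X 4)*(1+X 3+X 4)) *
    ((1+(X 1+X 2+X 3+X 4))*(1+(X 0+X 2+X 3+X 4))*(1+(X 0+X 1+X 3+X 4))*(1+(X 0+X 1+X 2+X 4))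
      *(1+(X 0+X 1+X 2+X 3))) := by
  unfold Q
  congr 1
  · rw [show (univ.filter (fun p : Fin 5 × Fin 5 => p.1 < p.2)) = {(0,1),(0,2),(0,3),(0,4),(1,2),
      (1,3),(1,4),(2,3),(2,4),(3,4)} by decide]
    repeat rw [Finset.prod_insert (by decide)]
    rw [Finset.prod_singleton]
    simp only [mul_assoc]
  · rw [show (univ : Finset (Fin 5)).powersetCard 4 = {{1,2,3,4},{0,2,3,4},{0,1,3,4},{0,1,2,4},{0,1,2,3}} by decide]
    repeat rw [Finset.prod_insert (by decide)]
    rw [Finset.prod_singleton]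
    repeat rw [Finset.sum_insert (by decide)]
    simp only [Finset.sum_singleton, mul_assoc, add_assoc]

lemma e2_eq : e 2 = X 0*X 1 + X 0*X 2 + X 0*X 3 + X 0*X 4 + X 1*X 2 + X 1*X 3 + X 1*X 4 + X 2*X 3
    + X 2*X 4 + X 3*X 4 := by
  unfold e esymm
  rw [show (univ : Finset (Fin 5)).powersetCard 2 = {{0,1},{0,2},{0,3},{0,4},{1,2},{1,3},{1,4},{2,3},{2,4},{3,4}} by decide]
  repeat rw [Finset.sum_insert (by decide)]
  rw [Finset.sum_singleton]
  repeat rw [Finset.prod_insert (by decide)]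
  simp only [Finset.prod_singleton]
  ring

lemma e3_eq : e 3 = X 0*X 1*X 2 + X 0*X 1*X 3 + X 0*X 1*X 4 + X 0*X 2*X 3 + X 0*X 2*X 4
    + X 0*X 3*X 4 + X 1*X 2*X 3 + X 1*X 2*X 4 + X 1*X 3*X 4 + X 2*X 3*X 4 := by
  unfold e esymm
  rw [show (univ : Finset (Fin 5)).powersetCard 3 = {{0,1,2},{0,1,3},{0,1,4},{0,2,3},{0,2,4},{0,3,4},{1,2,3},{1,2,4},{1,3,4},{2,3,4}} by decide]
  repeat rw [Finset.sum_insert (by decide)]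
  rw [Finset.sum_singleton]
  repeat rw [Finset.prod_insert (by decide)]
  simp only [Finset.prod_singleton]
  ring

lemma e4_eq : e 4 = X 0*X 1*X 2*X 3 + X 0*X 1*X 2*X 4 + X 0*X 1*X 3*X 4 + X 0*X 2*X 3*X 4
    + X 1*X 2*X 3*X 4 := by
  unfold e esymm
  rw [show (univ : Finset (Fin 5)).powersetCard 4 = {{1,2,3,4},{0,2,3,4},{0,1,3,4},{0,1,2,4},{0,1,2,3}} by decide]
  repeat rw [Finset.sum_insert (by decide)]
  rw [Finset.sum_singleton]
  repeat rw [Finset.prod_insert (by decide)]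
  simp only [Finset.prod_singleton]
  ring

lemma e5_eq : e 5 = X 0*X 1*X 2*X 3*X 4 := by
  unfold e esymm
  rw [show (univ : Finset (Fin 5)).powersetCard 5 = {{0,1,2,3,4}} by decide]
  rw [Finset.sum_singleton]
  repeat rw [Finset.prod_insert (by decide)]
  simp only [Finset.prod_singleton]
  ring

lemma Q_mod : Q - (1 + (e 3 * e 5 + e 4 ^ 2 + e 2 ^ 4)
      + (e 3*e 4*e 5 + e 2*e 5^2 + e 2^2*e 3*e 5 + e 2^2*e 4^2 + e 3^4)
      + (e 4*e 5^2 + e 3^3*e 5 + e 2^2*e 5^2 + e 3^2*e 4^2 + e 2*e 3*e 4*e 5)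
      + (e 5^3 + e 3^2*e 4*e 5 + e 2*e 3*e 5^2)) ∈ Ideal.span {e 1} := by
  rw [← Ideal.Quotient.eq]
  set f := Ideal.Quotient.mk (Ideal.span {e 1}) with hf
  have two : (2 : MvPolynomial (Fin 5) (ZMod 2) ⧸ Ideal.span {e 1}) = 0 := by
    have h : (2 : MvPolynomial (Fin 5) (ZMod 2)) = 0 := CharTwo.two_eq_zero
    have := congrArg f h
    rwa [map_ofNat, map_zero] at this
  have h1 : f (X 4) = -(f (X 0) + f (X 1) + f (X 2) + f (X 3)) := by
    have h0 : f (e 1) = 0 := Ideal.Quotient.eq_zero_iff_mem.2 (Ideal.mem_span_singleton_self _)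
    have h := (congrArg f e1_eq).symm.trans h0
    simp only [map_add] at h
    linear_combination h
  have h2 := congrArg f e2_eq
  have h3 := congrArg f e3_eq
  have h4 := congrArg f e4_eq
  have h5 := congrArg f e5_eq
  rw [Q_eq]
  simp only [map_add, map_mul, map_pow, map_one] at h2 h3 h4 h5 ⊢
  rw [lambda2 _ _ _ _ _ _ _ _ _ h1 h2 h3 h4 h5, lambda4 _ _ _ _ _ _ _ _ _ h1 h2 h3 h4 h5]
  exact total two _ _ _ _

lemma e_hom (i : ℕ) : (e i).IsHomogeneous i := by
  unfold e esymm
  refine IsHomogeneous.sum _ _ _ fun s hs => ?_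
  have := IsHomogeneous.prod s (fun j => (X j : MvPolynomial (Fin 5) (ZMod 2))) (fun _ => 1)
    (fun j _ => isHomogeneous_X _ _)
  simpa [(Finset.mem_powersetCard.1 hs).2] using this

lemma comp_mem (p : MvPolynomial (Fin 5) (ZMod 2)) (hp : p ∈ Ideal.span {e 1}) :
    homogeneousComponent 8 p ∈ Ideal.span {e 1} := by
  letI : GradedAlgebra (homogeneousSubmodule (Fin 5) (ZMod 2)) := MvPolynomial.gradedAlgebra
  refine homogeneousComponent_mem_of_mem ?_ hp 8
  refine Ideal.homogeneous_span _ _ ?_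
  rintro x rfl
  exact ⟨1, e_hom 1⟩

end C8aux

open C8aux in
/-- the degree-8 homogeneous component of `Q` is congruent to
`e₃e₅ + e₄² + e₂⁴` modulo the ideal `(e₁)`. -/
theorem c8_spinrep_SU5 :
    homogeneousComponent 8 Q - (e 3 * e 5 + e 4 ^ 2 + e 2 ^ 4)
      ∈ Ideal.span {e 1} := by
  have h := comp_mem _ Q_mod
  have m := fun (i j a b : ℕ) => ((e_hom i).pow a).mul ((e_hom j).pow b)
  have mm := fun (a b c d : ℕ) => (m 2 3 a b).mul (m 4 5 c d)
  have h8 : (e 3 * e 5 + e 4 ^ 2 + e 2 ^ 4).IsHomogeneous 8 := by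
    refine (IsHomogeneous.add ?_ ?_).add ?_
    · simpa using mm 0 1 0 1
    · simpa using mm 0 0 2 0
    · simpa using mm 4 0 0 0
  have h12 : (e 3*e 4*e 5 + e 2*e 5^2 + e 2^2*e 3*e 5 + e 2^2*e 4^2 + e 3^4).IsHomogeneous 12 := by
    refine (((IsHomogeneous.add ?_ ?_).add ?_).add ?_).add ?_
    · simpa [mul_assoc] using mm 0 1 1 1
    · simpa [mul_assoc] using mm 1 0 0 2
    · simpa [mul_assoc] using mm 2 1 0 1
    · simpa [mul_assoc] using mm 2 0 2 0
    · simpa [mul_assoc] using mm 0 4 0 0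
  have h14 : (e 4*e 5^2 + e 3^3*e 5 + e 2^2*e 5^2 + e 3^2*e 4^2
      + e 2*e 3*e 4*e 5).IsHomogeneous 14 := by
    refine (((IsHomogeneous.add ?_ ?_).add ?_).add ?_).add ?_
    · simpa [mul_assoc] using mm 0 0 1 2
    · simpa [mul_assoc] using mm 0 3 0 1
    · simpa [mul_assoc] using mm 2 0 0 2
    · simpa [mul_assoc] using mm 0 2 2 0
    · simpa [mul_assoc] using mm 1 1 1 1
  have h15 : (e 5^3 + e 3^2*e 4*e 5 + e 2*e 3*e 5^2).IsHomogeneous 15 := by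
    refine (IsHomogeneous.add ?_ ?_).add ?_
    · simpa [mul_assoc] using mm 0 0 0 3
    · simpa [mul_assoc] using mm 0 2 1 1
    · simpa [mul_assoc] using mm 1 1 0 2
  have h0 : (1 : MvPolynomial (Fin 5) (ZMod 2)).IsHomogeneous 0 := isHomogeneous_one _ _
  rw [map_sub, map_add, map_add, map_add, map_add,
    homogeneousComponent_of_mem h0, homogeneousComponent_of_mem h8,
    homogeneousComponent_of_mem h12, homogeneousComponent_of_mem h14,
    homogeneousComponent_of_mem h15] at h
  simpa using h
end
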